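/- Assume in addition T ≤ √2 (1−μ). Then the function f is strictly increasing on (1−μ, ∞), f(x) → −∞ as x → (1−μ) from the right, and f(x) → +∞ as x → +∞. Consequently there exists a unique collinear equilibrium point x₂ ∈ (1−μ, ∞) with f(x₂) = 0. -/

import Mathlib

/-- Collinear equilibrium function of the generalized photogravitational
Chermnykh problem. -/
noncomputable def fcol (μ q₁ A₂ Mb T n x : ℝ) : ℝ :=
  n ^ 2 * x
    - (1 - μ) * q₁ * (x + μ) / |x + μ| ^ 3
    - μ * (x + μ - 1) / |x + μ - 1| ^ 3
    - (3 / 2) * μ * A₂ * (x + μ - 1) / |x + μ - 1| ^ 5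
    - Mb * x / (x ^ 2 + T ^ 2) ^ ((3 : ℝ) / 2)

/-!
To the right of both primaries, `f x = n² x - g x` where `g` is the sum of the gravitational
attractions, all directed to the left. Those of the primaries and of the oblateness are negative
powers of a positive distance, hence decreasing, and the ones of the second primary blow up at
`1 - μ`. That of the belt, `x / (x² + T²)^(3/2)`, has derivative
`(T² - 2 x²) / (x² + T²)^(5/2)`, so for `x > 0` it decreases exactly beyond `|T| / √2`, which is
where `T ≤ √2 (1 - μ)` comes from. Thus `f` is a positive multiple of `x` minus a decreasing
function that blows up at `1 - μ`.
-/

open Set Filter Topology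

section LinearSubAntitone

variable {𝕜 : Type*} [Field 𝕜] [LinearOrder 𝕜] [IsStrictOrderedRing 𝕜] {c : 𝕜} {g : 𝕜 → 𝕜}

lemma strictMonoOn_const_mul_sub (hc : 0 < c) {s : Set 𝕜} (hg : AntitoneOn g s) :
    StrictMonoOn (fun x => c * x - g x) s := by
  intro x hx y hy hxy
  have hlin : c * x < c * y := mul_lt_mul_of_pos_left hxy hc
  have hgyx : g y ≤ g x := hg hx hy hxy.le
  dsimp only
  linarith

lemma tendsto_const_mul_sub_atTop (hc : 0 < c) {a : 𝕜} (hg : AntitoneOn g (Ioi a)) :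
    Tendsto (fun x => c * x - g x) atTop atTop := by
  obtain ⟨b, hb⟩ := exists_gt a
  have hlower : ∀ᶠ x in atTop, c * x - g b ≤ c * x - g x := by
    filter_upwards [eventually_ge_atTop b] with x hx
    exact sub_le_sub_left (hg hb (hb.trans_le hx) hx) _
  refine tendsto_atTop_mono' _ hlower ?_
  simpa only [sub_eq_add_neg, id] using
    tendsto_atTop_add_const_right _ (-g b) (tendsto_id.const_mul_atTop hc)

lemma tendsto_const_mul_sub_atBot [TopologicalSpace 𝕜] [OrderTopology 𝕜] (c : 𝕜) {a : 𝕜}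
    {s : Set 𝕜} (hg : Tendsto g (𝓝[s] a) atTop) :
    Tendsto (fun x => c * x - g x) (𝓝[s] a) atBot := by
  have hlin : Tendsto (fun x => c * x) (𝓝[s] a) (𝓝 (c * a)) :=
    ((continuous_const_mul c).tendsto a).mono_left nhdsWithin_le_nhds
  simpa only [sub_eq_add_neg, Function.comp_apply] using
    hlin.add_atBot (tendsto_neg_atTop_atBot.comp hg)

end LinearSubAntitone

section InversePower

variable {𝕜 : Type*} [Field 𝕜] [LinearOrder 𝕜] [IsStrictOrderedRing 𝕜]

lemma antitoneOn_div_sub_pow {c : 𝕜} (hc : 0 ≤ c) (a : 𝕜) (k : ℕ) :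
    AntitoneOn (fun x => c / (x - a) ^ k) (Ioi a) := by
  intro x hx y _ hxy
  have hpos : 0 < x - a := sub_pos.2 hx
  dsimp only
  gcongr

lemma tendsto_div_sub_pow_nhdsGT [TopologicalSpace 𝕜] [OrderTopology 𝕜] {c : 𝕜} (hc : 0 < c)
    (a : 𝕜) {k : ℕ} (hk : k ≠ 0) :
    Tendsto (fun x => c / (x - a) ^ k) (𝓝[>] a) atTop := by
  have hsub : Tendsto (fun x => x - a) (𝓝[>] a) (𝓝[>] 0) := by
    simpa only [Tendsto, sub_self] using (map_subRight_nhdsGT (c := a) (a := a)).le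
  have hinv : Tendsto (fun x => (x - a)⁻¹ ^ k) (𝓝[>] a) atTop :=
    (tendsto_pow_atTop hk).comp (tendsto_inv_nhdsGT_zero.comp hsub)
  simpa only [div_eq_mul_inv, inv_pow] using hinv.const_mul_atTop hc

end InversePower

lemma existsUnique_mem_Ioi_eq {α δ : Type*} [ConditionallyCompleteLinearOrder α]
    [TopologicalSpace α] [OrderTopology α] [DenselyOrdered α] [NoMaxOrder α] [LinearOrder δ]
    [TopologicalSpace δ] [OrderClosedTopology δ] {f : α → δ} {a : α} (hinj : InjOn f (Ioi a))
    (hcont : ContinuousOn f (Ioi a)) (hbot : Tendsto f (𝓝[>] a) atBot)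
    (htop : Tendsto f atTop atTop) (y : δ) : ∃! x, x ∈ Ioi a ∧ f x = y := by
  have hsurj : SurjOn f (Ioi a) univ :=
    hcont.surjOn_of_tendsto nonempty_Ioi ((tendsto_comp_coe_Ioi_atBot).2 hbot)
      (tendsto_comp_val_Ioi_atTop.2 htop)
  obtain ⟨x, hx, hfx⟩ := hsurj (mem_univ y)
  exact ⟨x, ⟨hx, hfx⟩, fun z ⟨hz, hfz⟩ => hinj hz hx (hfz.trans hfx.symm)⟩

/-- The in-plane attraction, at distance `x` from the origin, of a belt of unit mass with potential
`-1 / √(x² + T²)`; in the Miyamoto–Nagai model `T` is the sum of the flatness and core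
parameters. -/
noncomputable def beltAttraction (T x : ℝ) : ℝ :=
  x / (x ^ 2 + T ^ 2) ^ ((3 : ℝ) / 2)

lemma beltAttraction_nonneg (T : ℝ) {x : ℝ} (hx : 0 ≤ x) : 0 ≤ beltAttraction T x := by
  unfold beltAttraction
  positivity

lemma hasDerivAt_beltAttraction {T x : ℝ} (h : 0 < x ^ 2 + T ^ 2) :
    HasDerivAt (beltAttraction T)
      ((T ^ 2 - 2 * x ^ 2) / (x ^ 2 + T ^ 2) ^ ((5 : ℝ) / 2)) x := by
  have hsq : HasDerivAt (fun y : ℝ => y ^ 2 + T ^ 2) (2 * x) x := by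
    simpa using (hasDerivAt_pow 2 x).add_const (T ^ 2)
  have hdiv := (hasDerivAt_id x).div (hsq.rpow_const (p := 3 / 2) (.inl h.ne'))
    (Real.rpow_pos_of_pos h _).ne'
  refine hdiv.congr_deriv ?_
  have h12 : (x ^ 2 + T ^ 2) ^ ((3 : ℝ) / 2 - 1) = (x ^ 2 + T ^ 2) ^ ((1 : ℝ) / 2) := by
    norm_num
  have h32 : (x ^ 2 + T ^ 2) ^ ((3 : ℝ) / 2) =
      (x ^ 2 + T ^ 2) ^ ((1 : ℝ) / 2) * (x ^ 2 + T ^ 2) := by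
    rw [← Real.rpow_add_one h.ne']
    norm_num
  have h52 : (x ^ 2 + T ^ 2) ^ ((5 : ℝ) / 2) =
      (x ^ 2 + T ^ 2) ^ ((1 : ℝ) / 2) * (x ^ 2 + T ^ 2) ^ 2 := by
    rw [← Real.rpow_add_natCast h.ne']
    norm_num
  rw [h12, h32, h52]
  simp only [id]
  field_simp
  ring

lemma strictAntiOn_beltAttraction (T : ℝ) :
    StrictAntiOn (beltAttraction T) (Ioi (|T| / √2)) := by
  have hpos {x : ℝ} (hx : x ∈ Ioi (|T| / √2)) : 0 < x := lt_of_le_of_lt (by positivity) hx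
  have hderiv {x : ℝ} (hx : x ∈ Ioi (|T| / √2)) : HasDerivAt (beltAttraction T)
      ((T ^ 2 - 2 * x ^ 2) / (x ^ 2 + T ^ 2) ^ ((5 : ℝ) / 2)) x :=
    hasDerivAt_beltAttraction (by have := hpos hx; positivity)
  refine strictAntiOn_of_deriv_neg (convex_Ioi _)
    (fun x hx => (hderiv hx).continuousAt.continuousWithinAt) fun x hx => ?_
  rw [interior_Ioi] at hx
  have hx0 : 0 < x := hpos hx
  have hT : T ^ 2 < 2 * x ^ 2 := by
    have habs : |T| < x * √2 := (div_lt_iff₀ (by positivity)).1 hx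
    have hsq : |T| ^ 2 < (x * √2) ^ 2 := by gcongr
    rw [sq_abs, mul_pow, Real.sq_sqrt zero_le_two] at hsq
    linarith
  rw [(hderiv hx).deriv]
  exact div_neg_of_neg_of_pos (sub_neg.2 hT) (by positivity)

/-- The total gravitational attraction (of both primaries, of the oblateness of the second one and
of the belt) on a particle to the right of the primaries, counted positively to the left; it is
written without absolute values, and is the physical attraction only for `x > 1 - μ`. -/
noncomputable def collinearAttraction (μ q₁ A₂ Mb T x : ℝ) : ℝ :=
  (1 - μ) * q₁ / (x + μ) ^ 2 + μ / (x - (1 - μ)) ^ 2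
    + (3 / 2) * μ * A₂ / (x - (1 - μ)) ^ 4 + Mb * beltAttraction T x

lemma fcol_eqOn_sub_collinearAttraction (μ q₁ A₂ Mb T n : ℝ) :
    EqOn (fcol μ q₁ A₂ Mb T n) (fun x => n ^ 2 * x - collinearAttraction μ q₁ A₂ Mb T x)
      (Ioi (1 - μ)) := by
  intro x hx
  have hx₂ : 0 < x + μ - 1 := by linarith [mem_Ioi.1 hx]
  have hx₁ : 0 < x + μ := by linarith
  simp only [fcol, collinearAttraction, beltAttraction, abs_of_pos hx₁, abs_of_pos hx₂,
    sub_sub_eq_add_sub]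
  field_simp
  ring

section

variable {μ q₁ A₂ Mb T : ℝ}

lemma antitoneOn_collinearAttraction (hμ : 0 ≤ μ) (hq : 0 ≤ q₁) (hA : 0 ≤ A₂) (hM : 0 ≤ Mb)
    (hT : |T| ≤ √2 * (1 - μ)) :
    AntitoneOn (collinearAttraction μ q₁ A₂ Mb T) (Ioi (1 - μ)) := by
  have hm : 0 ≤ 1 - μ :=
    nonneg_of_mul_nonneg_right ((abs_nonneg T).trans hT) (by positivity)
  have hfirst : AntitoneOn (fun x => (1 - μ) * q₁ / (x + μ) ^ 2) (Ioi (1 - μ)) := by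
    have h := antitoneOn_div_sub_pow (mul_nonneg hm hq) (-μ) 2
    simp only [sub_neg_eq_add] at h
    exact h.mono (Ioi_subset_Ioi (by linarith))
  have hsecond := antitoneOn_div_sub_pow hμ (1 - μ) 2
  have hoblate := antitoneOn_div_sub_pow (c := (3 / 2) * μ * A₂) (by positivity) (1 - μ) 4
  have hbelt : AntitoneOn (beltAttraction T) (Ioi (1 - μ)) :=
    (strictAntiOn_beltAttraction T).antitoneOn.mono
      (Ioi_subset_Ioi ((div_le_iff₀' (by positivity)).2 hT))
  exact ((hfirst.add hsecond).add hoblate).add fun x hx y hy hxy =>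
    mul_le_mul_of_nonneg_left (hbelt hx hy hxy) hM

lemma continuousOn_collinearAttraction (hμ : μ ≤ 1) :
    ContinuousOn (collinearAttraction μ q₁ A₂ Mb T) (Ioi (1 - μ)) := by
  intro x hx
  have hx₂ : x - (1 - μ) ≠ 0 := (sub_pos.2 hx).ne'
  have hx₀ : 0 < x := (sub_nonneg.2 hμ).trans_lt hx
  have hx₁ : x + μ ≠ 0 := by linarith [mem_Ioi.1 hx]
  have hbelt : ContinuousAt (beltAttraction T) x :=
    (hasDerivAt_beltAttraction (by positivity)).continuousAt
  unfold collinearAttraction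
  exact ContinuousAt.continuousWithinAt (by fun_prop (disch := positivity))

lemma tendsto_collinearAttraction_nhdsGT (hμ0 : 0 < μ) (hμ1 : μ ≤ 1) (hq : 0 ≤ q₁)
    (hA : 0 ≤ A₂) (hM : 0 ≤ Mb) :
    Tendsto (collinearAttraction μ q₁ A₂ Mb T) (𝓝[>] (1 - μ)) atTop := by
  refine tendsto_atTop_mono' _ ?_ (tendsto_div_sub_pow_nhdsGT hμ0 (1 - μ) two_ne_zero)
  filter_upwards [self_mem_nhdsWithin] with x hx
  have hm : 0 ≤ 1 - μ := sub_nonneg.2 hμ1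
  have hfirst : 0 ≤ (1 - μ) * q₁ / (x + μ) ^ 2 := by positivity
  have hoblate : 0 ≤ (3 / 2) * μ * A₂ / (x - (1 - μ)) ^ 4 := by positivity
  have hbelt := mul_nonneg hM (beltAttraction_nonneg T (hm.trans (le_of_lt hx)))
  unfold collinearAttraction
  linarith

end

theorem collinear_point_right_general
    (μ q₁ A₂ Mb T n : ℝ)
    (hμ : 0 < μ) (hq : 0 ≤ q₁) (hA : 0 ≤ A₂) (hM : 0 ≤ Mb) (hn : n ≠ 0)
    (hT : |T| ≤ √2 * (1 - μ)) :
    StrictMonoOn (fcol μ q₁ A₂ Mb T n) (Ioi (1 - μ)) ∧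
    Tendsto (fcol μ q₁ A₂ Mb T n) (𝓝[>] (1 - μ)) atBot ∧
    Tendsto (fcol μ q₁ A₂ Mb T n) atTop atTop ∧
    ∃! x₂, x₂ ∈ Ioi (1 - μ) ∧ fcol μ q₁ A₂ Mb T n x₂ = 0 := by
  have hμ1 : μ ≤ 1 :=
    sub_nonneg.1 (nonneg_of_mul_nonneg_right ((abs_nonneg T).trans hT) (by positivity))
  have hn2 : 0 < n ^ 2 := by positivity
  have heq := fcol_eqOn_sub_collinearAttraction μ q₁ A₂ Mb T n
  have hanti := antitoneOn_collinearAttraction hμ.le hq hA hM hT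
  have hmono := (strictMonoOn_const_mul_sub hn2 hanti).congr heq.symm
  have hbot := (tendsto_const_mul_sub_atBot (n ^ 2)
    (tendsto_collinearAttraction_nhdsGT hμ hμ1 hq hA hM)).congr'
    heq.symm.eventuallyEq_nhdsWithin
  have htop := (tendsto_const_mul_sub_atTop hn2 hanti).congr'
    (heq.symm.eventuallyEq_of_mem (Ioi_mem_atTop _))
  have hcont : ContinuousOn (fcol μ q₁ A₂ Mb T n) (Ioi (1 - μ)) :=
    ((continuousOn_const.mul continuousOn_id).sub (continuousOn_collinearAttraction hμ1)).congr heq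
  exact ⟨hmono, hbot, htop, existsUnique_mem_Ioi_eq hmono.injOn hcont hbot htop 0⟩

/-- If `T ≤ √2 (1-μ)`, then on `(1-μ, ∞)` the function `f` is strictly increasing,
tends to `-∞` as `x → (1-μ)⁺` and to `+∞` at `+∞`; consequently there is a unique
collinear equilibrium point `x₂ ∈ (1-μ, ∞)`. -/
theorem collinear_point_right
    (μ q₁ A₂ Mb T n : ℝ)
    (hμ0 : 0 < μ) (hμ1 : μ < 1 / 2) (hq0 : 0 < q₁) (hq1 : q₁ ≤ 1)
    (hA : 0 ≤ A₂) (hM : 0 ≤ Mb) (hT : 0 < T) (hn : 0 < n)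
    (hT2 : T ≤ Real.sqrt 2 * (1 - μ)) :
    StrictMonoOn (fcol μ q₁ A₂ Mb T n) (Set.Ioi (1 - μ)) ∧
    Filter.Tendsto (fcol μ q₁ A₂ Mb T n)
      (nhdsWithin (1 - μ) (Set.Ioi (1 - μ))) Filter.atBot ∧
    Filter.Tendsto (fcol μ q₁ A₂ Mb T n) Filter.atTop Filter.atTop ∧
    ∃! x₂, x₂ ∈ Set.Ioi (1 - μ) ∧ fcol μ q₁ A₂ Mb T n x₂ = 0 :=
  collinear_point_right_general μ q₁ A₂ Mb T n hμ0 hq0.le hA hM hn.ne' (by rwa [abs_of_pos hT])
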